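/- arXiv:2401.00531 — 2 statements merged into one kernel-verified Lean document; each statement's English description precedes it below -/
import Mathlib

section
/- Let G be a finite group, p a prime, and let C be a nonempty collection of nontrivial p-subgroups of G that is closed under G-conjugation and under passage to overgroups in G that are p-groups. Then the quotient of the geometric realization of the order complex of the poset C (ordered by inclusion) by the conjugation action of G is a contractible topological space. -/
open scoped Pointwise

/-- The conjugate subgroup `g⁻¹ P g`. -/
def conjSub {G : Type*} [Group G] (g : G) (P : Subgroup G) : Subgroup G :=
  P.map (MulAut.conj g⁻¹).toMonoidHom

/-- `S` is a Sylow `p`-subgroup of the (possibly infinite) group `G`: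
a finite `p`-subgroup such that every finite `p`-subgroup of `G` is conjugate
in `G` to a subgroup of `S`. -/
def IsSylow (p : ℕ) {G : Type*} [Group G] (S : Subgroup G) : Prop :=
  Finite S ∧ IsPGroup p S ∧
    ∀ Q : Subgroup G, Finite Q → IsPGroup p Q → ∃ g : G, conjSub g Q ≤ S

/-- `S` is a Sylow `p`-subgroup of the subgroup `N` of `G`:
`S` is a finite `p`-subgroup contained in `N` such that every finite `p`-subgroup
of `G` contained in `N` is conjugate by an element of `N` to a subgroup of `S`. -/
def IsSylowIn (p : ℕ) {G : Type*} [Group G] (N S : Subgroup G) : Prop :=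
  S ≤ N ∧ Finite S ∧ IsPGroup p S ∧
    ∀ Q : Subgroup G, Q ≤ N → Finite Q → IsPGroup p Q → ∃ g ∈ N, conjSub g Q ≤ S

/-- The normalizer of a chain of subgroups: the intersection of the normalizers
of the members of the chain. -/
def chainNorm {G : Type*} [Group G] {n : ℕ} (γ : Fin (n + 1) → Subgroup G) : Subgroup G :=
  ⨅ i, Subgroup.normalizer (γ i : Set G)

/-- `G` is pseudo finite at `p` if for every chain of finite `p`-subgroups of `G`
(the trivial subgroup allowed in the chain), the normalizer of the chain has a
Sylow `p`-subgroup. -/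
def PseudoFiniteAt (p : ℕ) (G : Type*) [Group G] : Prop :=
  ∀ (n : ℕ) (γ : Fin (n + 1) → Subgroup G), Monotone γ →
    (∀ i, Finite (γ i)) → (∀ i, IsPGroup p (γ i)) →
      ∃ S : Subgroup G, IsSylowIn p (chainNorm γ) S

/-- The member of the chain preceding position `i`, with the convention that the
member preceding position `0` is the trivial subgroup. -/
def chainPrev {G : Type*} [Group G] {n : ℕ} (γ : Fin (n + 1) → Subgroup G)
    (i : Fin (n + 1)) : Subgroup G :=
  match i with
  | ⟨0, _⟩ => ⊥
  | ⟨j + 1, h⟩ => γ ⟨j, by omega⟩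

/-- A strictly increasing chain `γ = (P_0 < ⋯ < P_n)` of nontrivial finite
`p`-subgroups is redundant if for every Sylow `p`-subgroup `Q` of `N_G(γ)` and
every `0 ≤ i ≤ n`, `P_i ≠ Q·P_{i-1}` (with `P_{-1} = 1`). -/
def IsRedundant (p : ℕ) {G : Type*} [Group G] {n : ℕ} (γ : Fin (n + 1) → Subgroup G) : Prop :=
  ∀ Q : Subgroup G, IsSylowIn p (chainNorm γ) Q →
    ∀ i : Fin (n + 1), (γ i : Set G) ≠ (Q : Set G) * (chainPrev γ i : Set G)

/-- The chain obtained from `γ` by inserting the subgroup `H` immediately after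
position `i`. -/
def insertChain {G : Type*} [Group G] {n : ℕ} (γ : Fin (n + 1) → Subgroup G)
    (i : Fin (n + 1)) (H : Subgroup G) : Fin (n + 2) → Subgroup G :=
  fun j =>
    if h : (j : ℕ) ≤ (i : ℕ) then γ ⟨j, by have := i.isLt; omega⟩
    else if h2 : (j : ℕ) = (i : ℕ) + 1 then H
    else γ ⟨(j : ℕ) - 1, by have := j.isLt; omega⟩

/-- The chain obtained from `σ` by deleting the member at position `i`. -/
def deleteChain {G : Type*} [Group G] {n : ℕ} (σ : Fin (n + 2) → Subgroup G)
    (i : Fin (n + 2)) : Fin (n + 1) → Subgroup G :=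
  fun j =>
    if h : (j : ℕ) < (i : ℕ) then σ ⟨j, by have := j.isLt; omega⟩
    else σ ⟨(j : ℕ) + 1, by have := j.isLt; omega⟩

open CategoryTheory

/-- The conjugation action of `g ∈ G` on a collection `C` of subgroups of `G`
that is closed under conjugation: `P ↦ g⁻¹Pg`. -/
def conjFun {G : Type} [Group G] (C : Set (Subgroup G))
    (hconj : ∀ P ∈ C, ∀ g : G, conjSub g P ∈ C) (g : G) : C → C :=
  fun P => ⟨conjSub g P.1, hconj P.1 P.2 g⟩

/-- Conjugation is inclusion preserving, hence a map of posets. -/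
lemma conjFun_monotone {G : Type} [Group G] (C : Set (Subgroup G))
    (hconj : ∀ P ∈ C, ∀ g : G, conjSub g P ∈ C) (g : G) :
    Monotone (conjFun C hconj g) := by
  intro P Q h
  exact Subgroup.map_mono h

/-!
The orbit space is the realization of the simplicial set of `G`-conjugacy classes of chains. For a
strict chain `T` in `C`, let `Q` be a Sylow `p`-subgroup of its normalizer `N_G(T)`. If every member
of `T` contains `Q`, then `T` is a single Sylow subgroup of `G`, because normalizers grow in
`p`-groups. Otherwise let `L` be the largest member not containing `Q`. Then `Q ⊔ L = QL` is again a
`p`-group in `C`, comparable with every member of `T`, and inserting or removing it leaves `(Q, L)`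
a valid choice. As `Q` is unique up to conjugation in `N_G(T)`, this matches the conjugacy classes
of all chains other than the Sylow vertex in pairs (chain, face). Along codimension one faces `|Q|`
and then `|L|` change monotonically, so the matching is acyclic and the inclusion of the Sylow
vertex is an anodyne extension.

Anodyne extensions lift against the endpoint map from paths based at the vertex of the realization,
since horns are deformation retracts of simplices. Lifting the identity yields a continuous choice
of paths from the vertex, hence a contraction.
-/

universe u

section StdSimplex

variable {α β : Type*} [Fintype α] [Fintype β]

theorem stdSimplex_map_apply_of_injective {f : α → β} (hf : f.Injective) (w : stdSimplex ℝ α)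
    (a : α) : stdSimplex.map f w (f a) = w a := by
  classical
  rw [stdSimplex.map_coe, FunOnFinite.linearMap_apply_apply]
  simp only [hf.eq_iff]
  exact Finset.sum_eq_single_of_mem a (by simp) (by simp)

theorem stdSimplex_map_apply_of_notMem_range {f : α → β} (w : stdSimplex ℝ α) {b : β}
    (hb : b ∉ Set.range f) : stdSimplex.map f w b = 0 := by
  classical
  rw [stdSimplex.map_coe, FunOnFinite.linearMap_apply_apply]
  exact Finset.sum_eq_zero fun a ha => absurd ⟨a, by simpa using ha⟩ hb

theorem stdSimplex_map_injective {f : α → β} (hf : f.Injective) :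
    Function.Injective (stdSimplex.map (S := ℝ) f) := by
  intro w w' h
  ext a
  have := congrArg (fun z : stdSimplex ℝ β => z (f a)) h
  simpa only [stdSimplex_map_apply_of_injective hf] using this

theorem exists_stdSimplex_map_eq {f : α → β} (hf : f.Injective) (z : stdSimplex ℝ β)
    (hz : ∀ b ∉ Set.range f, z b = 0) : ∃ w, stdSimplex.map f w = z := by
  have hsum : ∑ a, z (f a) = 1 :=
    (Fintype.sum_of_injective f hf _ _ hz fun _ => rfl).trans (stdSimplex.sum_eq_one z)
  refine ⟨⟨fun a => z (f a), fun a => stdSimplex.zero_le z (f a), hsum⟩, ?_⟩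
  ext b
  by_cases hb : b ∈ Set.range f
  · obtain ⟨a, rfl⟩ := hb
    exact stdSimplex_map_apply_of_injective hf _ a
  · exact (stdSimplex_map_apply_of_notMem_range _ hb).trans (hz b hb).symm

theorem stdSimplex_map_succAbove_self {n : ℕ} (j : Fin (n + 1)) (w : stdSimplex ℝ (Fin n)) :
    stdSimplex.map j.succAbove w j = 0 :=
  stdSimplex_map_apply_of_notMem_range w (by simp)

theorem exists_stdSimplex_map_succAbove_eq {n : ℕ} {j : Fin (n + 1)}
    {z : stdSimplex ℝ (Fin (n + 1))} (hz : z j = 0) : ∃ w, stdSimplex.map j.succAbove w = z :=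
  exists_stdSimplex_map_eq Fin.succAbove_right_injective z (by simpa using hz)

theorem continuous_stdSimplex_apply (a : α) : Continuous fun x : stdSimplex ℝ α => x a :=
  (continuous_apply a).comp continuous_subtype_val

end StdSimplex

section Horn

variable {n : ℕ} (i : Fin (n + 2))

/-- The union of the faces of the topological simplex `Δⁿ⁺¹` containing the vertex `i`. -/
def topologicalHorn : Set (stdSimplex ℝ (Fin (n + 2))) :=
  {x | ∃ j, j ≠ i ∧ x j = 0}

/-- The faces of the topological horn, assembled into one map. -/
noncomputable def faceToTopologicalHorn :
    (Σ _ : {j // j ≠ i}, stdSimplex ℝ (Fin (n + 1))) → topologicalHorn i :=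
  fun q => ⟨stdSimplex.map q.1.1.succAbove q.2, q.1, q.1.2, stdSimplex_map_succAbove_self _ _⟩

theorem isQuotientMap_faceToTopologicalHorn :
    Topology.IsQuotientMap (faceToTopologicalHorn i) := by
  refine .of_surjective_continuous ?_ ?_
  · rintro ⟨x, j, hj, hx⟩
    obtain ⟨w, rfl⟩ := exists_stdSimplex_map_succAbove_eq hx
    exact ⟨⟨⟨j, hj⟩, w⟩, rfl⟩
  · refine Continuous.subtype_mk (continuous_sigma fun j => ?_) _
    exact stdSimplex.continuous_map j.1.succAbove

/-- The distance along the direction of `hornFlow` from a point of the simplex to the horn. -/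
noncomputable def hornDepth (x : stdSimplex ℝ (Fin (n + 2))) : ℝ :=
  Finset.univ.inf' Finset.univ_nonempty fun k => x (i.succAbove k)

theorem hornDepth_le (x : stdSimplex ℝ (Fin (n + 2))) {j : Fin (n + 2)} (hj : j ≠ i) :
    hornDepth i x ≤ x j := by
  obtain ⟨k, rfl⟩ := Fin.exists_succAbove_eq hj
  exact Finset.inf'_le _ (Finset.mem_univ k)

theorem exists_apply_eq_hornDepth (x : stdSimplex ℝ (Fin (n + 2))) :
    ∃ j, j ≠ i ∧ x j = hornDepth i x := by
  obtain ⟨k, -, hk⟩ := Finset.exists_mem_eq_inf' Finset.univ_nonempty fun k => x (i.succAbove k)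
  exact ⟨i.succAbove k, Fin.succAbove_ne _ _, hk.symm⟩

theorem hornDepth_nonneg (x : stdSimplex ℝ (Fin (n + 2))) : 0 ≤ hornDepth i x :=
  Finset.le_inf' _ _ fun _ _ => stdSimplex.zero_le x _

theorem hornDepth_eq_zero {x : stdSimplex ℝ (Fin (n + 2))} (hx : x ∈ topologicalHorn i) :
    hornDepth i x = 0 := by
  obtain ⟨j, hj, hxj⟩ := hx
  exact le_antisymm (hxj ▸ hornDepth_le i x hj) (hornDepth_nonneg i x)

@[fun_prop]
theorem continuous_hornDepth : Continuous (hornDepth i) :=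
  Continuous.finset_inf'_apply _ fun _ _ => continuous_stdSimplex_apply _

/-- Moving a point of the simplex towards the vertex `i` by decreasing all other barycentric
coordinates at unit speed. The time `t` is clamped to the interval `[0, hornDepth i x]`, at the end
of which the horn is reached. -/
noncomputable def hornFlow (x : stdSimplex ℝ (Fin (n + 2))) (t : ℝ) : stdSimplex ℝ (Fin (n + 2)) :=
  let s := max 0 (min t (hornDepth i x))
  ⟨fun j => if j = i then x j + (n + 1) * s else x j - s, by
    have hs : s ≤ hornDepth i x := max_le (hornDepth_nonneg i x) (min_le_right _ _)
    constructor
    · intro j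
      dsimp only
      split_ifs with hj
      · have := stdSimplex.zero_le x j
        positivity
      · linarith [hornDepth_le i x hj]
    · have hsum := stdSimplex.sum_eq_one x
      rw [Fin.sum_univ_succAbove _ i] at hsum ⊢
      simp only [if_true, Fin.succAbove_ne, if_false, Finset.sum_sub_distrib, Finset.sum_const,
        Finset.card_univ, Fintype.card_fin, nsmul_eq_mul, Nat.cast_add, Nat.cast_one]
      linarith⟩

theorem hornFlow_apply (x : stdSimplex ℝ (Fin (n + 2))) (t : ℝ) (j : Fin (n + 2)) :
    hornFlow i x t j = if j = i then x j + (n + 1) * max 0 (min t (hornDepth i x))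
      else x j - max 0 (min t (hornDepth i x)) := rfl

@[fun_prop]
theorem continuous_hornFlow :
    Continuous fun q : stdSimplex ℝ (Fin (n + 2)) × ℝ => hornFlow i q.1 q.2 := by
  refine Continuous.subtype_mk (continuous_pi fun j => ?_) _
  have hj : Continuous fun q : stdSimplex ℝ (Fin (n + 2)) × ℝ => q.1 j :=
    (continuous_stdSimplex_apply j).comp continuous_fst
  split_ifs <;> fun_prop

theorem hornFlow_zero (x : stdSimplex ℝ (Fin (n + 2))) : hornFlow i x 0 = x := by
  ext j
  simp [hornFlow_apply, hornDepth_nonneg i x]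

theorem hornFlow_hornDepth_mem (x : stdSimplex ℝ (Fin (n + 2))) :
    hornFlow i x (hornDepth i x) ∈ topologicalHorn i := by
  obtain ⟨j, hj, hx⟩ := exists_apply_eq_hornDepth i x
  refine ⟨j, hj, ?_⟩
  simp [hornFlow_apply, hj, hx, hornDepth_nonneg i x]

end Horn

section BasedPath

variable {Y : Type*} [TopologicalSpace Y] {y₀ : Y}

/-- The space of paths in `Y` starting at `y₀`, with free endpoint; it is the total space of the
path fibration. -/
abbrev BasedPath (Y : Type*) [TopologicalSpace Y] (y₀ : Y) : Type _ :=
  {f : C(unitInterval, Y) // f 0 = y₀}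

/-- The endpoint projection of the path fibration. -/
def basedPathEndpoint (Y : Type*) [TopologicalSpace Y] (y₀ : Y) : C(BasedPath Y y₀, Y) where
  toFun f := f.1 1
  continuous_toFun := (continuous_eval_const 1).comp continuous_subtype_val

/-- Follow the path `α x` and then the track of the homotopy `H x` backwards from time `τ x`,
rescaling the total time `1 + τ x` to `1`. -/
theorem exists_extend_basedPath {D : Type*} [TopologicalSpace D] (τ : C(D, ℝ)) (hτ : ∀ x, 0 ≤ τ x)
    (H : C(D × ℝ, Y)) (α : C(D, BasedPath Y y₀)) (hα : ∀ x, (α x).1 1 = H (x, τ x)) :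
    ∃ γ : C(D, BasedPath Y y₀), (∀ x, (γ x).1 1 = H (x, 0)) ∧ ∀ x, τ x = 0 → γ x = α x := by
  let F : D × unitInterval → Y := fun q =>
    if (q.2 : ℝ) * (1 + τ q.1) ≤ 1 then
      (α q.1).1 (Set.projIcc 0 1 zero_le_one ((q.2 : ℝ) * (1 + τ q.1)))
    else H (q.1, 1 + τ q.1 - (q.2 : ℝ) * (1 + τ q.1))
  have hF : Continuous F := by
    have htime : Continuous fun q : D × unitInterval => (q.2 : ℝ) * (1 + τ q.1) := by fun_prop
    refine Continuous.if_le ?_ (by fun_prop) htime continuous_const fun q hq => ?_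
    · exact (continuous_subtype_val.comp (α.continuous.comp continuous_fst)).eval
        (continuous_projIcc.comp htime)
    · rw [hq, Set.projIcc_right, add_sub_cancel_left]
      exact hα q.1
  have hF0 (x : D) : F (x, 0) = y₀ := by
    simpa [F, Set.projIcc_left] using (α x).2
  have hF1 (x : D) : F (x, 1) = H (x, 0) := by
    rcases (hτ x).eq_or_lt with h | h
    · simpa [F, ← h] using hα x
    · simp [F, not_le.mpr h]
  have hFα (x : D) (hx : τ x = 0) (t : unitInterval) : F (x, t) = (α x).1 t := by
    simp [F, hx, t.2.2]
  let γ : C(D, C(unitInterval, Y)) := ContinuousMap.curry ⟨F, hF⟩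
  exact ⟨⟨fun x => ⟨γ x, hF0 x⟩, γ.continuous.subtype_mk _⟩, hF1,
    fun x hx => Subtype.ext (ContinuousMap.ext (hFα x hx))⟩

theorem exists_lift_of_topologicalHorn {n : ℕ} (i : Fin (n + 2))
    (β : C(stdSimplex ℝ (Fin (n + 2)), Y)) (α : C(topologicalHorn i, BasedPath Y y₀))
    (hα : ∀ x, (α x).1 1 = β x) :
    ∃ γ : C(stdSimplex ℝ (Fin (n + 2)), BasedPath Y y₀),
      (∀ x, (γ x).1 1 = β x) ∧ ∀ x : topologicalHorn i, γ x = α x := by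
  let retraction : C(stdSimplex ℝ (Fin (n + 2)), topologicalHorn i) :=
    ⟨fun x => ⟨hornFlow i x (hornDepth i x), hornFlow_hornDepth_mem i x⟩,
      Continuous.subtype_mk (by fun_prop) _⟩
  have retraction_eq (x : topologicalHorn i) : retraction x = x :=
    Subtype.ext (by simp [retraction, hornDepth_eq_zero i x.2, hornFlow_zero])
  obtain ⟨γ, hγ, hγα⟩ := exists_extend_basedPath ⟨hornDepth i, continuous_hornDepth i⟩
    (hornDepth_nonneg i) (β.comp ⟨_, continuous_hornFlow i⟩) (α.comp retraction) fun x => hα _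
  refine ⟨γ, fun x => (hγ x).trans (congrArg β (hornFlow_zero i x)), fun x => ?_⟩
  exact (hγα x (hornDepth_eq_zero i x.2)).trans (congrArg α (retraction_eq x))

/-- Moving the endpoint back along the chosen paths contracts `Y` to `y₀`. -/
theorem contractibleSpace_of_section (s : C(Y, BasedPath Y y₀)) (hs : ∀ y, (s y).1 1 = y) :
    ContractibleSpace Y := by
  have hcont : Continuous fun q : unitInterval × Y => (s q.2).1 q.1 :=
    (continuous_subtype_val.comp (s.continuous.comp continuous_snd)).eval continuous_fst
  rw [contractible_iff_id_nullhomotopic]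
  exact ⟨y₀, ⟨ContinuousMap.Homotopy.symm ⟨⟨_, hcont⟩, fun y => (s y).2, hs⟩⟩⟩

end BasedPath

section PathFibration

open Simplicial Opposite

theorem horn_δ_face_eq {n : ℕ} {i : Fin (n + 3)} {j k : Fin (n + 2)} (hjk : j ≤ k)
    (hj : j.castSucc ≠ i) (hk : k.succ ≠ i) :
    (Λ[n + 2, i] : SSet.{u}).δ j (SSet.horn.face i k.succ hk) =
      (Λ[n + 2, i] : SSet.{u}).δ k (SSet.horn.face i j.castSucc hj) := by
  have h := ConcreteCategory.congr_hom ((Δ[n + 2] : SSet.{u}).δ_comp_δ hjk)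
    (SSet.stdSimplex.objEquiv.symm (𝟙 _))
  exact Subtype.ext h

variable {Z : TopCat.{u}} {n : ℕ} {i : Fin (n + 2)}

/-- The `j`-th face of a horn in the singular simplicial set of `Z`, as a singular simplex. -/
noncomputable def singularHornFace (a : (Λ[n + 1, i] : SSet.{u}) ⟶ TopCat.toSSet.obj Z)
    (j : {j // j ≠ i}) : C(stdSimplex ℝ (Fin (n + 1)), Z) :=
  Z.toSSetObjEquiv (op ⦋n⦌) (a.app _ (SSet.horn.face i j.1 j.2))

theorem singularHornFace_eq_of_lt (a : (Λ[n + 1, i] : SSet.{u}) ⟶ TopCat.toSSet.obj Z)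
    {j k : {j // j ≠ i}} (hjk : j < k) {x y : stdSimplex ℝ (Fin (n + 1))}
    (h : stdSimplex.map (S := ℝ) j.1.succAbove x = stdSimplex.map k.1.succAbove y) :
    singularHornFace a j x = singularHornFace a k y := by
  obtain ⟨j, hj⟩ := j
  obtain ⟨k, hk⟩ := k
  cases n with
  | zero => simp only [Subtype.mk_lt_mk] at hjk; omega
  | succ n =>
  obtain ⟨j, rfl⟩ := Fin.exists_castSucc_eq.mpr (Fin.ne_last_of_lt hjk)
  obtain ⟨k, rfl⟩ := Fin.exists_succ_eq.mpr (Fin.ne_zero_of_lt hjk)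
  have hjk : j ≤ k := Fin.castSucc_lt_succ_iff.mp hjk
  have hcomm (v : stdSimplex ℝ (Fin (n + 1))) :
      stdSimplex.map j.castSucc.succAbove (stdSimplex.map k.succAbove v) =
        stdSimplex.map k.succ.succAbove (stdSimplex.map j.succAbove v) := by
    have := congrArg (fun f => ⇑(SimplexCategory.Hom.toOrderHom f)) (SimplexCategory.δ_comp_δ hjk)
    rw [stdSimplex.map_comp_apply, stdSimplex.map_comp_apply]
    exact congrArg (stdSimplex.map · v) this.symm
  have hx : x k = 0 := by
    rw [← stdSimplex_map_apply_of_injective (f := j.castSucc.succAbove)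
      Fin.succAbove_right_injective, h]
    rw [Fin.succAbove_castSucc_of_le _ _ hjk]
    exact stdSimplex_map_succAbove_self _ _
  obtain ⟨v, rfl⟩ := exists_stdSimplex_map_succAbove_eq hx
  obtain rfl : stdSimplex.map j.succAbove v = y :=
    stdSimplex_map_injective Fin.succAbove_right_injective ((hcomm v).symm.trans h)
  have hface := congrArg (fun s => Z.toSSetObjEquiv _ (a.app _ s) v) (horn_δ_face_eq hjk hj hk)
  simp only [SSet.δ_naturality_apply] at hface
  exact hface.symm

theorem exists_continuousMap_topologicalHorn (a : (Λ[n + 1, i] : SSet.{u}) ⟶ TopCat.toSSet.obj Z) :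
    ∃ α : C(topologicalHorn i, Z), ∀ j x,
      α (faceToTopologicalHorn i ⟨j, x⟩) = singularHornFace a j x := by
  have hq := isQuotientMap_faceToTopologicalHorn i
  let faces : C(Σ _ : {j // j ≠ i}, stdSimplex ℝ (Fin (n + 1)), Z) :=
    ⟨fun q => singularHornFace a q.1 q.2,
      continuous_sigma fun j => (singularHornFace a j).continuous⟩
  have hfaces : Function.FactorsThrough faces (faceToTopologicalHorn i) := by
    rintro ⟨j, x⟩ ⟨k, y⟩ hxy
    have hxy : stdSimplex.map j.1.succAbove x = stdSimplex.map k.1.succAbove y :=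
      congrArg Subtype.val hxy
    rcases lt_trichotomy j k with hjk | rfl | hjk
    · exact singularHornFace_eq_of_lt a hjk hxy
    · rw [stdSimplex_map_injective Fin.succAbove_right_injective hxy]
    · exact (singularHornFace_eq_of_lt a hjk hxy.symm).symm
  exact ⟨hq.lift (f := ⟨_, hq.continuous⟩) faces hfaces, fun j x =>
    ContinuousMap.congr_fun (hq.lift_comp (f := ⟨_, hq.continuous⟩) faces hfaces) ⟨j, x⟩⟩

theorem singularHornFace_horn_ι_comp (b : Δ[n + 1] ⟶ TopCat.toSSet.obj Z) (j : {j // j ≠ i})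
    (x : stdSimplex ℝ (Fin (n + 1))) :
    singularHornFace (Λ[n + 1, i].ι ≫ b) j x =
      Z.toSSetObjEquiv (op ⦋n + 1⦌) (SSet.yonedaEquiv b) (stdSimplex.map j.1.succAbove x) := by
  have h := SSet.δ_naturality_apply b j.1 (SSet.stdSimplex.objEquiv.symm (𝟙 ⦋n + 1⦌))
  exact congrArg (fun s => Z.toSSetObjEquiv (op ⦋n⦌) s x) h

theorem hasLiftingProperty_horn_basedPathEndpoint (Y : TopCat.{u}) (y₀ : Y) (i : Fin (n + 2)) :
    HasLiftingProperty Λ[n + 1, i].ι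
      (TopCat.toSSet.map (TopCat.ofHom (basedPathEndpoint Y y₀))) where
  sq_hasLift {a b} sq := by
    obtain ⟨α, hα⟩ := exists_continuousMap_topologicalHorn a
    have hαb (x : topologicalHorn i) :
        (α x).1 1 = Y.toSSetObjEquiv (op ⦋n + 1⦌) (SSet.yonedaEquiv b) x := by
      obtain ⟨⟨j, w⟩, rfl⟩ := (isQuotientMap_faceToTopologicalHorn i).surjective x
      rw [hα]
      refine Eq.trans ?_ (singularHornFace_horn_ι_comp b j w)
      rw [← sq.w]
      rfl
    obtain ⟨γ, hγb, hγα⟩ := exists_lift_of_topologicalHorn i _ α hαb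
    let c := ((TopCat.of (BasedPath Y y₀)).toSSetObjEquiv (op ⦋n + 1⦌)).symm γ
    refine ⟨⟨⟨SSet.yonedaEquiv.symm c, SSet.horn.hom_ext _ _ fun j hj => ?_, ?_⟩⟩⟩
    · apply ((TopCat.of (BasedPath Y y₀)).toSSetObjEquiv (op ⦋n⦌)).injective
      ext1 x
      refine Eq.trans ?_ ((hγα (faceToTopologicalHorn i ⟨⟨j, hj⟩, x⟩)).trans (hα ⟨j, hj⟩ x))
      refine (singularHornFace_horn_ι_comp _ ⟨j, hj⟩ x).trans ?_
      rw [Equiv.apply_symm_apply]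
      rfl
    · apply SSet.yonedaEquiv.injective
      apply (Y.toSSetObjEquiv (op ⦋n + 1⦌)).injective
      ext1 x
      rw [SSet.yonedaEquiv_comp, Equiv.apply_symm_apply]
      exact hγb x

theorem rlp_J_basedPathEndpoint (Y : TopCat.{u}) (y₀ : Y) :
    SSet.modelCategoryQuillen.J.rlp
      (TopCat.toSSet.map (TopCat.ofHom (basedPathEndpoint Y y₀))) := by
  intro _ _ _ hf
  simp only [SSet.modelCategoryQuillen.J, MorphismProperty.iSup_iff] at hf
  obtain ⟨n, ⟨i⟩⟩ := hf
  exact hasLiftingProperty_horn_basedPathEndpoint _ _ i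

/-- Lifting the identity of the realization against the path fibration provides the paths along
which to contract. -/
theorem contractibleSpace_toTop_of_anodyneExtensions_ofSimplex {X : SSet.{u}} (x₀ : X _⦋0⦌)
    (hx₀ : SSet.anodyneExtensions (SSet.Subcomplex.ofSimplex x₀).ι) :
    ContractibleSpace (SSet.toTop.obj X) := by
  let η := sSetTopAdj.unit.app X
  let y₀ : SSet.toTop.obj X := TopCat.toSSetObj₀Equiv (η.app _ x₀)
  let e := TopCat.ofHom (basedPathEndpoint (SSet.toTop.obj X) y₀)
  let constPath : BasedPath (SSet.toTop.obj X) y₀ := ⟨ContinuousMap.const _ y₀, rfl⟩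
  have sq : CommSq (SSet.const (TopCat.toSSetObj₀Equiv.symm constPath))
      (SSet.Subcomplex.ofSimplex x₀).ι (TopCat.toSSet.map e) η := ⟨by
    have hconst : (TopCat.toSSet.map e).app _ (TopCat.toSSetObj₀Equiv.symm constPath) =
        η.app _ x₀ :=
      TopCat.toSSetObj₀Equiv.injective rfl
    rw [SSet.Subcomplex.ofSimplex_ι, SSet.const_comp, SSet.const_comp, hconst]⟩
  have := hx₀ _ (rlp_J_basedPathEndpoint (SSet.toTop.obj X) y₀)
  let s := (sSetTopAdj.homEquiv _ _).symm sq.lift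
  have hs : s ≫ e = 𝟙 _ := by
    rw [← Adjunction.homEquiv_naturality_right_symm, sq.fac_right]
    exact (Equiv.symm_apply_eq _).mpr (Adjunction.homEquiv_id _ _).symm
  exact contractibleSpace_of_section s.hom fun y => ConcreteCategory.congr_hom hs y

end PathFibration

section OrbitSSet

open Simplicial Opposite

variable {ι : Type*} {N : SSet.{u}} (ρ : ι → (N ⟶ N))

/-- The coequalizer of a family of endomorphisms of a simplicial set: the simplices of `N` modulo
the relation generated by `x ∼ ρ g x`. For a group action this is the simplicial set of orbits. -/
def orbitSSet : SSet.{u} where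
  obj n := Quot fun x y : N.obj n => ∃ g, (ρ g).app n x = y
  map f := TypeCat.ofHom (Quot.map (N.map f) fun x _ ⟨g, hg⟩ =>
    ⟨g, hg ▸ ConcreteCategory.congr_hom ((ρ g).naturality f) x⟩)
  map_id n := by
    ext ⟨x⟩
    exact congrArg (Quot.mk _) (N.map_id_apply n x)
  map_comp f g := by
    ext ⟨x⟩
    exact congrArg (Quot.mk _) (N.map_comp_apply f g x)

/-- The projection onto the coequalizer. -/
def orbitSSetProj : N ⟶ orbitSSet ρ where
  app _ := TypeCat.ofHom (Quot.mk _)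

theorem orbitSSetProj_app_surjective (n : SimplexCategoryᵒᵖ) :
    Function.Surjective ((orbitSSetProj ρ).app n) :=
  Quot.mk_surjective

theorem comp_orbitSSetProj (g : ι) : ρ g ≫ orbitSSetProj ρ = orbitSSetProj ρ := by
  ext n x
  exact (Quot.sound ⟨g, rfl⟩).symm

variable {ρ}

/-- The universal property of `orbitSSet`. -/
def orbitSSetDesc {Z : SSet.{u}} (v : N ⟶ Z) (hv : ∀ g, ρ g ≫ v = v) : orbitSSet ρ ⟶ Z where
  app n := TypeCat.ofHom (Quot.lift (v.app n) fun x _ ⟨g, hg⟩ =>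
    hg ▸ (ConcreteCategory.congr_hom (NatTrans.congr_app (hv g) n) x).symm)
  naturality _ _ f := by
    ext ⟨x⟩
    exact ConcreteCategory.congr_hom (v.naturality f) x

theorem orbitSSetProj_comp_desc {Z : SSet.{u}} (v : N ⟶ Z) (hv : ∀ g, ρ g ≫ v = v) :
    orbitSSetProj ρ ≫ orbitSSetDesc v hv = v := rfl

theorem orbitSSet_hom_ext {Z : SSet.{u}} {v w : orbitSSet ρ ⟶ Z}
    (h : orbitSSetProj ρ ≫ v = orbitSSetProj ρ ≫ w) : v = w := by
  ext n ⟨x⟩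
  exact ConcreteCategory.congr_hom (NatTrans.congr_app h n) x

variable (ρ)

/-- The orbit relation induced by `ρ` on the geometric realization. -/
def RealizationOrbitRel (x y : SSet.toTop.obj N) : Prop :=
  ∃ g, SSet.toTop.map (ρ g) x = y

/-- The quotient map from the geometric realization to its space of orbits. -/
noncomputable def realizationOrbitMk :
    SSet.toTop.obj N ⟶ TopCat.of (Quot (RealizationOrbitRel ρ)) :=
  TopCat.ofHom ⟨Quot.mk _, continuous_quot_mk⟩

theorem map_comp_realizationOrbitMk (g : ι) :
    SSet.toTop.map (ρ g) ≫ realizationOrbitMk ρ = realizationOrbitMk ρ := by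
  ext x
  exact (Quot.sound ⟨g, rfl⟩).symm

/-- The comparison map from the orbits of the realization to the realization of the orbits. -/
noncomputable def realizationOrbitToOrbitSSet :
    TopCat.of (Quot (RealizationOrbitRel ρ)) ⟶ SSet.toTop.obj (orbitSSet ρ) :=
  TopCat.ofHom ⟨Quot.lift (SSet.toTop.map (orbitSSetProj ρ)) (by
      rintro x _ ⟨g, rfl⟩
      rw [← ConcreteCategory.comp_apply, ← Functor.map_comp, comp_orbitSSetProj]),
    continuous_quot_lift _ (SSet.toTop.map (orbitSSetProj ρ)).hom.continuous⟩

/-- The inverse comparison map, obtained from the adjunction between realization and singular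
simplicial sets. -/
noncomputable def orbitSSetToRealizationOrbit :
    SSet.toTop.obj (orbitSSet ρ) ⟶ TopCat.of (Quot (RealizationOrbitRel ρ)) :=
  (sSetTopAdj.homEquiv _ _).symm
    (orbitSSetDesc (sSetTopAdj.homEquiv _ _ (realizationOrbitMk ρ)) fun g => by
      rw [← Adjunction.homEquiv_naturality_left, map_comp_realizationOrbitMk])

theorem map_proj_comp_orbitSSetToRealizationOrbit :
    SSet.toTop.map (orbitSSetProj ρ) ≫ orbitSSetToRealizationOrbit ρ = realizationOrbitMk ρ := by
  rw [orbitSSetToRealizationOrbit, ← Adjunction.homEquiv_naturality_left_symm,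
    orbitSSetProj_comp_desc, Equiv.symm_apply_apply]

theorem toTop_orbitSSet_hom_ext {Y : TopCat.{u}} {f g : SSet.toTop.obj (orbitSSet ρ) ⟶ Y}
    (h : SSet.toTop.map (orbitSSetProj ρ) ≫ f = SSet.toTop.map (orbitSSetProj ρ) ≫ g) : f = g := by
  apply (sSetTopAdj.homEquiv _ _).injective
  apply orbitSSet_hom_ext
  rw [← Adjunction.homEquiv_naturality_left, h, Adjunction.homEquiv_naturality_left]

/-- Geometric realization commutes with the formation of orbits. -/
noncomputable def realizationOrbitIso :
    TopCat.of (Quot (RealizationOrbitRel ρ)) ≅ SSet.toTop.obj (orbitSSet ρ) where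
  hom := realizationOrbitToOrbitSSet ρ
  inv := orbitSSetToRealizationOrbit ρ
  hom_inv_id := by
    ext ⟨x⟩
    exact ConcreteCategory.congr_hom (map_proj_comp_orbitSSetToRealizationOrbit ρ) x
  inv_hom_id := by
    apply toTop_orbitSSet_hom_ext
    rw [← Category.assoc, map_proj_comp_orbitSSetToRealizationOrbit, Category.comp_id]
    rfl

end OrbitSSet

section GroupOrbits

open Simplicial

variable {G : Type*} [Group G] {N : SSet.{u}} {ρ : G → (N ⟶ N)} {n : ℕ}

theorem orbitSSetProj_app_eq_iff (hone : ρ 1 = 𝟙 N) (hmul : ∀ g h, ρ g ≫ ρ h = ρ (g * h))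
    {x y : N _⦋n⦌} : (orbitSSetProj ρ).app _ x = (orbitSSetProj ρ).app _ y ↔
      ∃ g, (ρ g).app _ x = y := by
  have hmul_apply (g h : G) (z : N _⦋n⦌) : (ρ h).app _ ((ρ g).app _ z) = (ρ (g * h)).app _ z := by
    rw [← hmul]; rfl
  refine ⟨fun h => ?_, fun ⟨g, hg⟩ => Quot.sound ⟨g, hg⟩⟩
  have hgen := Quot.eqvGen_exact h
  clear h
  induction hgen with
  | rel _ _ h => exact h
  | refl z => exact ⟨1, by rw [hone]; rfl⟩
  | symm z w _ ih =>
    obtain ⟨g, rfl⟩ := ih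
    exact ⟨g⁻¹, by rw [hmul_apply, mul_inv_cancel, hone]; rfl⟩
  | trans _ _ _ _ _ ih ih' =>
    obtain ⟨g, rfl⟩ := ih
    obtain ⟨h, rfl⟩ := ih'
    exact ⟨g * h, (hmul_apply g h _).symm⟩

theorem orbitSSetProj_app_mem_nonDegenerate_iff (hone : ρ 1 = 𝟙 N)
    (hmul : ∀ g h, ρ g ≫ ρ h = ρ (g * h)) {x : N _⦋n⦌} :
    (orbitSSetProj ρ).app _ x ∈ (orbitSSet ρ).nonDegenerate n ↔ x ∈ N.nonDegenerate n := by
  rw [SSet.mem_nonDegenerate_iff_notMem_degenerate, SSet.mem_nonDegenerate_iff_notMem_degenerate]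
  refine not_congr ⟨fun ⟨m, hm, f, y, hy⟩ => ?_, fun hx => SSet.degenerate_app_apply hx _⟩
  obtain ⟨y, rfl⟩ := orbitSSetProj_app_surjective ρ _ y
  rw [← NatTrans.naturality_apply] at hy
  obtain ⟨g, rfl⟩ := (orbitSSetProj_app_eq_iff hone hmul).1 hy
  exact SSet.degenerate_app_apply ⟨m, hm, f, y, rfl⟩ _

end GroupOrbits

section MaximalPSubgroups

variable {G : Type*} [Group G] {p : ℕ} {N Q Q' R : Subgroup G} {T T' : Set (Subgroup G)}

theorem card_pointwise_smul_subgroup (a : MulAut G) (P : Subgroup G) :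
    Nat.card (a • P : Subgroup G) = Nat.card P :=
  (Nat.card_congr (Subgroup.equivSMul a P).toEquiv).symm

theorem card_subgroup_lt_card_of_lt [Finite G] {P Q : Subgroup G} (h : P < Q) :
    Nat.card P < Nat.card Q :=
  Set.ncard_lt_ncard (SetLike.coe_ssubset_coe.2 h) (Set.toFinite _)

theorem lt_inf_normalizer_of_isPGroup [Fact p.Prime] [Finite R] (hR : IsPGroup p R) (hQR : Q < R) :
    Q < R ⊓ Subgroup.normalizer (Q : Set G) := by
  refine lt_of_le_not_ge (le_inf hQR.le Subgroup.le_normalizer) fun h => ?_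
  have : Group.IsNilpotent R := hR.isNilpotent
  have hlt : Q.subgroupOf R < ⊤ := lt_top_iff_ne_top.2 fun htop =>
    hQR.not_ge (Subgroup.subgroupOf_eq_top.1 htop)
  obtain ⟨x, hx, hxQ⟩ :=
    SetLike.exists_of_lt (Group.normalizerCondition_of_isNilpotent (Q.subgroupOf R) hlt)
  rw [← Subgroup.subgroupOf_normalizer_eq hQR.le] at hx
  exact hxQ (h ⟨x.2, hx⟩)

/-- The elements of `G` normalizing every member of `T`; the normalizer `N_G(γ)` when `T` is the
set of members of a chain `γ`. -/
def commonNormalizer (T : Set (Subgroup G)) : Subgroup G :=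
  ⨅ P ∈ T, Subgroup.normalizer (P : Set G)

theorem mem_commonNormalizer_iff {x : G} :
    x ∈ commonNormalizer T ↔ ∀ P ∈ T, MulAut.conj x • P = P := by
  simp only [commonNormalizer, Subgroup.mem_iInf, Subgroup.mem_normalizer_iff_map_conj_eq]
  rfl

theorem commonNormalizer_anti (h : T ⊆ T') : commonNormalizer T' ≤ commonNormalizer T :=
  biInf_mono h

theorem commonNormalizer_smul (a : MulAut G) (T : Set (Subgroup G)) :
    commonNormalizer (a • T) = a • commonNormalizer T := by
  ext x
  have hconj : MulAut.conj x * a = a * MulAut.conj (a⁻¹ • x) := by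
    ext y
    simp [MulAut.smul_def]
  rw [Subgroup.mem_pointwise_smul_iff_inv_smul_mem, mem_commonNormalizer_iff,
    mem_commonNormalizer_iff, ← Set.image_smul, Set.forall_mem_image]
  simp only [← mul_smul, hconj]
  simp only [mul_smul, smul_left_cancel_iff]

theorem smul_set_eq_self_of_mem_commonNormalizer {n : G} (hn : n ∈ commonNormalizer T) :
    MulAut.conj n • T = T :=
  (Set.image_congr (mem_commonNormalizer_iff.1 hn)).trans (Set.image_id' T)

/-- `Q` is maximal among the `p`-subgroups of `G` contained in `N`, that is, a Sylow `p`-subgroup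
of `N` regarded as a subgroup of `G`. -/
def IsMaximalPSubgroup (p : ℕ) (N Q : Subgroup G) : Prop :=
  Maximal (fun R : Subgroup G => IsPGroup p R ∧ R ≤ N) Q

namespace IsMaximalPSubgroup

theorem isPGroup (h : IsMaximalPSubgroup p N Q) : IsPGroup p Q := h.prop.1

theorem le (h : IsMaximalPSubgroup p N Q) : Q ≤ N := h.prop.2

theorem smul (h : IsMaximalPSubgroup p N Q) (a : MulAut G) :
    IsMaximalPSubgroup p (a • N) (a • Q) := by
  refine ⟨⟨h.isPGroup.map _, Subgroup.pointwise_smul_le_pointwise_smul_iff.2 h.le⟩, ?_⟩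
  rintro R ⟨hR, hRN⟩ hQR
  rw [← Subgroup.pointwise_smul_le_pointwise_smul_iff (a := a⁻¹), inv_smul_smul] at hRN hQR ⊢
  exact h.2 ⟨hR.map _, hRN⟩ hQR

theorem eq_of_inf_normalizer_le [Fact p.Prime] [Finite R] (h : IsMaximalPSubgroup p N Q)
    (hR : IsPGroup p R) (hQR : Q ≤ R) (hN : R ⊓ Subgroup.normalizer (Q : Set G) ≤ N) : R = Q := by
  by_contra hne
  have hlt := lt_inf_normalizer_of_isPGroup hR (lt_of_le_of_ne hQR (Ne.symm hne))
  exact hlt.not_ge (h.2 ⟨hR.to_le inf_le_left, hN⟩ hlt.le)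

end IsMaximalPSubgroup

theorem exists_isMaximalPSubgroup_ge [Finite G] (hR : IsPGroup p R) (hRN : R ≤ N) :
    ∃ Q, IsMaximalPSubgroup p N Q ∧ R ≤ Q :=
  let ⟨Q, hRQ, hQ⟩ := (Set.toFinite {R : Subgroup G | IsPGroup p R ∧ R ≤ N}).exists_le_maximal
    ⟨hR, hRN⟩
  ⟨Q, hQ, hRQ⟩

theorem IsMaximalPSubgroup.exists_sylow_eq_subgroupOf (h : IsMaximalPSubgroup p N Q) :
    ∃ S : Sylow p N, (S : Subgroup N) = Q.subgroupOf N := by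
  refine ⟨⟨Q.subgroupOf N, h.isPGroup.comap_of_injective _ N.subtype_injective, ?_⟩, rfl⟩
  intro U hU hle
  refine le_antisymm (Subgroup.map_le_iff_le_comap.1 (h.2 ⟨hU.map _, Subgroup.map_subtype_le U⟩ ?_))
    hle
  simpa [Subgroup.subgroupOf_map_subtype, h.le] using Subgroup.map_mono (f := N.subtype) hle

theorem IsMaximalPSubgroup.exists_conj_smul_eq [Fact p.Prime] [Finite G]
    (h : IsMaximalPSubgroup p N Q) (h' : IsMaximalPSubgroup p N Q') :
    ∃ n ∈ N, MulAut.conj n • Q = Q' := by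
  obtain ⟨S, hS⟩ := h.exists_sylow_eq_subgroupOf
  obtain ⟨S', hS'⟩ := h'.exists_sylow_eq_subgroupOf
  obtain ⟨n, rfl⟩ := MulAction.exists_smul_eq N S S'
  rw [Sylow.coe_subgroup_smul, hS, Subgroup.conj_smul_subgroupOf h.le, Subgroup.subgroupOf_inj,
    inf_eq_left.2 (Subgroup.conj_smul_le_of_le h.le n), inf_eq_left.2 h'.le] at hS'
  exact ⟨n, n.2, hS'⟩

theorem IsMaximalPSubgroup.eq_singleton_of_forall_le [Fact p.Prime] [Finite G]
    (hQ : IsMaximalPSubgroup p (commonNormalizer T) Q) (hT : ∀ P ∈ T, IsPGroup p P)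
    (hchain : IsChain (· ≤ ·) T) (hne : T.Nonempty) (hle : ∀ P ∈ T, Q ≤ P) : T = {Q} := by
  refine hne.subset_singleton_iff.1 (Set.sdiff_eq_empty.1 (Set.not_nonempty_iff_eq_empty.1 ?_))
  intro hne'
  obtain ⟨P, ⟨hPT, hPQ⟩, hPmin⟩ := (Set.toFinite (T \ {Q})).exists_minimal hne'
  refine hPQ (hQ.eq_of_inf_normalizer_le (hT P hPT) (hle P hPT) fun x ⟨hxP, hxQ⟩ => ?_)
  rw [mem_commonNormalizer_iff]
  intro R hR
  by_cases hRQ : R = Q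
  · rw [hRQ]
    exact Subgroup.mem_normalizer_iff_map_conj_eq.1 hxQ
  · have hPR : P ≤ R := (hchain.total hPT hR).elim id (hPmin ⟨hR, hRQ⟩)
    exact Subgroup.conj_smul_eq_self_of_mem (hPR hxP)

theorem IsMaximalPSubgroup.top_of_commonNormalizer_singleton [Fact p.Prime] [Finite G]
    (hQ : IsMaximalPSubgroup p (commonNormalizer {Q}) Q) : IsMaximalPSubgroup p ⊤ Q := by
  refine ⟨⟨hQ.isPGroup, le_top⟩, fun R ⟨hR, _⟩ hQR => ?_⟩
  refine (hQ.eq_of_inf_normalizer_le hR hQR fun x hx => ?_).le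
  simpa [commonNormalizer] using hx.2

theorem IsMaximalPSubgroup.card_le_card [Fact p.Prime] [Finite G] (hQ : IsMaximalPSubgroup p N Q)
    (hR : IsPGroup p R) (hRN : R ≤ N) : Nat.card R ≤ Nat.card Q := by
  obtain ⟨Q', hQ', hRQ'⟩ := exists_isMaximalPSubgroup_ge hR hRN
  obtain ⟨n, -, rfl⟩ := hQ'.exists_conj_smul_eq hQ
  rw [card_pointwise_smul_subgroup]
  exact Subgroup.card_le_of_le hRQ'

end MaximalPSubgroups

section Pivots

variable {G : Type*} [Group G] {p : ℕ} {Q L Q' L' : Subgroup G} {T F : Set (Subgroup G)}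

/-- A Sylow `p`-subgroup `Q` of the normalizer of the chain `T` together with the largest member
`L` of `T` not containing `Q`. The matching of chains adds `Q ⊔ L` to `T`, or removes it. -/
structure IsPivot (p : ℕ) (T : Set (Subgroup G)) (Q L : Subgroup G) : Prop where
  isMaximal : IsMaximalPSubgroup p (commonNormalizer T) Q
  mem : L ∈ T
  not_le : ¬ Q ≤ L
  le_of_not_le : ∀ P ∈ T, ¬ Q ≤ P → P ≤ L

namespace IsPivot

theorem smul (h : IsPivot p T Q L) (a : MulAut G) : IsPivot p (a • T) (a • Q) (a • L) where
  isMaximal := commonNormalizer_smul a T ▸ h.isMaximal.smul a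
  mem := Set.smul_mem_smul_set h.mem
  not_le := Subgroup.pointwise_smul_le_pointwise_smul_iff.not.2 h.not_le
  le_of_not_le := by
    rintro _ ⟨P, hP, rfl⟩ hQP
    rw [Subgroup.pointwise_smul_le_pointwise_smul_iff] at hQP ⊢
    exact h.le_of_not_le P hP hQP

theorem lt_sup (h : IsPivot p T Q L) : L < Q ⊔ L :=
  right_lt_sup.2 h.not_le

theorem isPGroup_sup (h : IsPivot p T Q L) (hL : IsPGroup p L) :
    IsPGroup p (Q ⊔ L : Subgroup G) :=
  IsPGroup.to_sup_of_normal_right' h.isMaximal.isPGroup hL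
    (h.isMaximal.le.trans (biInf_le _ h.mem))

theorem isChain_insert_sup (h : IsPivot p T Q L) (hT : IsChain (· ≤ ·) T) :
    IsChain (· ≤ ·) (insert (Q ⊔ L) T) := by
  refine hT.insert fun P hP _ => ?_
  by_cases hQP : Q ≤ P
  · exact .inl (sup_le hQP ((hT.total h.mem hP).resolve_right fun hPL => h.not_le (hQP.trans hPL)))
  · exact .inr ((h.le_of_not_le P hP hQP).trans le_sup_right)

theorem insert_sup (h : IsPivot p T Q L) : IsPivot p (insert (Q ⊔ L) T) Q L where
  isMaximal := by
    refine ⟨⟨h.isMaximal.isPGroup, fun x hx => ?_⟩, fun R ⟨hR, hRN⟩ hQR =>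
      h.isMaximal.2 ⟨hR, hRN.trans (commonNormalizer_anti (Set.subset_insert _ _))⟩ hQR⟩
    have hxT := mem_commonNormalizer_iff.1 (h.isMaximal.le hx)
    rw [mem_commonNormalizer_iff, Set.forall_mem_insert]
    exact ⟨by rw [Subgroup.smul_sup, Subgroup.conj_smul_eq_self_of_mem hx, hxT L h.mem], hxT⟩
  mem := Set.mem_insert_of_mem _ h.mem
  not_le := h.not_le
  le_of_not_le := Set.forall_mem_insert.2 ⟨fun hQ => absurd le_sup_left hQ, h.le_of_not_le⟩

variable [Fact p.Prime] [Finite G]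

-- What normalizes `Q` and every member of `T \ {Q ⊔ L}`, among them `L`, normalizes `Q ⊔ L`.
theorem sdiff_sup (h : IsPivot p T Q L) : IsPivot p (T \ {Q ⊔ L}) Q L where
  isMaximal := by
    refine ⟨⟨h.isMaximal.isPGroup, h.isMaximal.le.trans (commonNormalizer_anti Set.sdiff_subset)⟩,
      fun R ⟨hR, hRN⟩ hQR => (h.isMaximal.eq_of_inf_normalizer_le hR hQR fun x ⟨hxR, hxQ⟩ => ?_).le⟩
    have hxT := mem_commonNormalizer_iff.1 (hRN hxR)
    have hxQ : MulAut.conj x • Q = Q := Subgroup.mem_normalizer_iff_map_conj_eq.1 hxQ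
    rw [mem_commonNormalizer_iff]
    intro P hP
    by_cases hPM : P = Q ⊔ L
    · rw [hPM, Subgroup.smul_sup, hxQ, hxT L ⟨h.mem, h.lt_sup.ne⟩]
    · exact hxT P ⟨hP, hPM⟩
  mem := ⟨h.mem, h.lt_sup.ne⟩
  not_le := h.not_le
  le_of_not_le P hP := h.le_of_not_le P hP.1

theorem of_isMaximal (h : IsPivot p T Q L)
    (hQ' : IsMaximalPSubgroup p (commonNormalizer T) Q') : IsPivot p T Q' L := by
  obtain ⟨n, hn, rfl⟩ := h.isMaximal.exists_conj_smul_eq hQ'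
  have hfix := mem_commonNormalizer_iff.1 hn
  simpa only [smul_set_eq_self_of_mem_commonNormalizer hn, hfix L h.mem] using
    h.smul (MulAut.conj n)

theorem right_unique (h : IsPivot p T Q L) (h' : IsPivot p T Q' L') : L = L' :=
  have h'' := h.of_isMaximal h'.isMaximal
  le_antisymm (h'.le_of_not_le L h''.mem h''.not_le) (h''.le_of_not_le L' h'.mem h'.not_le)

theorem exists_conj_smul_sup_eq (h : IsPivot p T Q L) (h' : IsPivot p T Q' L') :
    ∃ n ∈ commonNormalizer T, MulAut.conj n • (Q ⊔ L) = Q' ⊔ L' := by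
  obtain ⟨n, hn, rfl⟩ := h.isMaximal.exists_conj_smul_eq h'.isMaximal
  refine ⟨n, hn, ?_⟩
  rw [Subgroup.smul_sup, mem_commonNormalizer_iff.1 hn L h.mem, h.right_unique h']

theorem sup_eq_sup_of_mem (h : IsPivot p T Q L) (hM : Q ⊔ L ∈ T) (h' : IsPivot p T Q' L') :
    Q ⊔ L = Q' ⊔ L' := by
  obtain ⟨n, hn, hsup⟩ := h.exists_conj_smul_sup_eq h'
  rwa [mem_commonNormalizer_iff.1 hn _ hM] at hsup

theorem sup_notMem_sdiff (h : IsPivot p T Q L) (h' : IsPivot p (T \ {Q ⊔ L}) Q' L') :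
    Q' ⊔ L' ∉ T \ {Q ⊔ L} := fun hM =>
  hM.2 (h'.sup_eq_sup_of_mem hM h.sdiff_sup)

theorem exists_conj_smul_eq_of_sdiff {T' : Set (Subgroup G)} (h : IsPivot p T Q L)
    (hM : Q ⊔ L ∈ T) (h' : IsPivot p T' Q' L') (hM' : Q' ⊔ L' ∈ T') {g : G}
    (hg : MulAut.conj g • (T \ {Q ⊔ L}) = T' \ {Q' ⊔ L'}) : ∃ k : G, MulAut.conj k • T = T' := by
  have hface := h.sdiff_sup.smul (MulAut.conj g)
  rw [hg] at hface
  obtain ⟨n, hn, hsup⟩ := hface.exists_conj_smul_sup_eq h'.sdiff_sup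
  refine ⟨n * g, ?_⟩
  rw [← Set.insert_sdiff_self_of_mem hM, ← Set.insert_sdiff_self_of_mem hM', map_mul, mul_smul,
    ← Set.image_smul, ← Set.image_smul, Set.image_insert_eq, Set.image_insert_eq, Set.image_smul,
    Set.image_smul, hg, smul_set_eq_self_of_mem_commonNormalizer hn, Subgroup.smul_sup, hsup]

theorem card_lt_or_card_lt_of_subset (hF : IsPivot p F Q L) (hQL : Q ⊔ L ∉ F)
    (h : IsPivot p T Q' L') (hFT : F ⊆ T) (hM : Q' ⊔ L' ∈ F) :
    Nat.card Q' < Nat.card Q ∨ Nat.card Q' = Nat.card Q ∧ Nat.card L < Nat.card L' := by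
  have hQ'N : Q' ≤ commonNormalizer F := h.isMaximal.le.trans (commonNormalizer_anti hFT)
  obtain ⟨R, hR, hQ'R⟩ := exists_isMaximalPSubgroup_ge h.isMaximal.isPGroup hQ'N
  have hRL : IsPivot p F R L := hF.of_isMaximal hR
  have hcard : Nat.card R = Nat.card Q :=
    le_antisymm (hF.isMaximal.card_le_card hR.isPGroup hR.le)
      (hR.card_le_card hF.isMaximal.isPGroup hF.isMaximal.le)
  rcases hQ'R.eq_or_lt with rfl | hlt
  · refine .inr ⟨hcard, card_subgroup_lt_card_of_lt ?_⟩
    refine (h.le_of_not_le L (hFT hF.mem) hRL.not_le).lt_of_ne ?_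
    rintro rfl
    exact hQL (hRL.sup_eq_sup_of_mem hM hF ▸ hM)
  · exact .inl (hcard ▸ card_subgroup_lt_card_of_lt hlt)

end IsPivot

theorem exists_isPivot_of_not_forall_le [Finite G]
    (hQ : IsMaximalPSubgroup p (commonNormalizer T) Q) (hchain : IsChain (· ≤ ·) T)
    (hnot : ¬ ∀ P ∈ T, Q ≤ P) : ∃ L, IsPivot p T Q L := by
  push Not at hnot
  obtain ⟨L, ⟨hLT, hQL⟩, hLmax⟩ := (Set.toFinite {P | P ∈ T ∧ ¬ Q ≤ P}).exists_maximal hnot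
  exact ⟨L, hQ, hLT, hQL, fun P hP hQP => (hchain.total hP hLT).elim id (hLmax ⟨hP, hQP⟩)⟩

end Pivots

theorem exists_strictMono_range_eq_of_isChain {α : Type*} [PartialOrder α] {T : Set α} {n : ℕ}
    (hT : IsChain (· ≤ ·) T) (hcard : T.ncard = n + 1) :
    ∃ f : Fin (n + 1) → α, StrictMono f ∧ Set.range f = T := by
  classical
  let := hT.linearOrder
  have := (Set.finite_of_ncard_pos (by lia : 0 < T.ncard)).fintype
  have hcard' : Fintype.card T = n + 1 := by
    rw [← hcard, Set.ncard_eq_toFinset_card', Set.toFinset_card]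
  let e : Fin (n + 1) ≃o T := Fintype.orderIsoFinOfCardEq T hcard'
  refine ⟨Subtype.val ∘ e, fun i j hij => e.strictMono hij, ?_⟩
  rw [Set.range_comp, e.surjective.range_eq, Set.image_univ, Subtype.range_coe]

section OrbitNerve

open Simplicial Opposite

variable {G : Type} [Group G] {C : Set (Subgroup G)} {n m : ℕ}

theorem conjSub_eq_smul (g : G) (P : Subgroup G) : conjSub g P = MulAut.conj g⁻¹ • P := rfl

/-- The set of subgroups occurring in a chain of members of `C`. -/
def chainMembers (γ : nerve C _⦋n⦌) : Set (Subgroup G) :=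
  Set.range fun i => (γ.obj i : Subgroup G)

theorem isChain_chainMembers (γ : nerve C _⦋n⦌) : IsChain (· ≤ ·) (chainMembers γ) := by
  rintro _ ⟨i, rfl⟩ _ ⟨j, rfl⟩ -
  exact (le_total i j).imp (fun h => γ.monotone h) (fun h => γ.monotone h)

theorem mem_of_mem_chainMembers {γ : nerve C _⦋n⦌} {P : Subgroup G} (hP : P ∈ chainMembers γ) :
    P ∈ C := by
  obtain ⟨i, rfl⟩ := hP
  exact (γ.obj i).2

theorem ncard_chainMembers {γ : nerve C _⦋n⦌} (hγ : StrictMono γ.obj) :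
    (chainMembers γ).ncard = n + 1 := by
  have hinj : Function.Injective fun i => (γ.obj i : Subgroup G) :=
    Subtype.val_injective.comp hγ.injective
  exact (Nat.card_range_of_injective hinj).trans (Nat.card_fin _)

theorem chainMembers_δ {γ : nerve C _⦋n + 1⦌} (hγ : StrictMono γ.obj) (i : Fin (n + 2)) :
    chainMembers ((nerve C).δ i γ) = chainMembers γ \ {(γ.obj i : Subgroup G)} := by
  have hinj : Function.Injective fun j => (γ.obj j : Subgroup G) :=
    Subtype.val_injective.comp hγ.injective
  have hcomp : (fun j => (((nerve C).δ i γ).obj j : Subgroup G)) =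
      (fun j => (γ.obj j : Subgroup G)) ∘ i.succAbove := rfl
  rw [chainMembers, hcomp, Set.range_comp, Fin.range_succAbove,
    Set.image_compl_eq_range_sdiff_image hinj, Set.image_singleton]
  rfl

theorem exists_chain_chainMembers_eq {T : Set (Subgroup G)} (hTC : T ⊆ C)
    (hT : IsChain (· ≤ ·) T) (hcard : T.ncard = n + 1) :
    ∃ γ : nerve C _⦋n⦌, StrictMono γ.obj ∧ chainMembers γ = T := by
  obtain ⟨f, hf, rfl⟩ := exists_strictMono_range_eq_of_isChain hT hcard
  have hfC : StrictMono fun i => (⟨f i, hTC ⟨i, rfl⟩⟩ : C) := hf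
  exact ⟨hfC.monotone.functor, hfC, rfl⟩

variable (hconj : ∀ P ∈ C, ∀ g : G, conjSub g P ∈ C)

variable (C) in
/-- The action of `g` on the order complex of `C` induced by conjugation. -/
abbrev conjNerve (g : G) : nerve C ⟶ nerve C :=
  nerveFunctor.map (conjFun_monotone C hconj g).functor.toCatHom

theorem conjNerve_one : conjNerve C hconj 1 = 𝟙 (nerve C) := by
  ext k γ : 4
  refine nerve.ext_of_isThin (C := C) (funext fun i => Subtype.ext ?_)
  change conjSub 1 (γ.obj i : Subgroup G) = γ.obj i
  rw [conjSub_eq_smul, inv_one, map_one, one_smul]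

theorem conjNerve_comp (g h : G) :
    conjNerve C hconj g ≫ conjNerve C hconj h = conjNerve C hconj (g * h) := by
  ext k γ : 4
  refine nerve.ext_of_isThin (C := C) (funext fun i => Subtype.ext ?_)
  change conjSub h (conjSub g (γ.obj i : Subgroup G)) = conjSub (g * h) (γ.obj i : Subgroup G)
  rw [conjSub_eq_smul, conjSub_eq_smul, conjSub_eq_smul, mul_inv_rev, map_mul, mul_smul]

/-- The simplicial set of `G`-conjugacy classes of chains of members of `C`. -/
abbrev orbitNerve : SSet.{0} := orbitSSet (conjNerve C hconj)

/-- The conjugacy class of a chain. -/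
def chainClass (γ : nerve C _⦋n⦌) : orbitNerve hconj _⦋n⦌ :=
  (orbitSSetProj (conjNerve C hconj)).app _ γ

theorem chainClass_surjective : Function.Surjective (chainClass hconj (n := n)) :=
  orbitSSetProj_app_surjective _ _

theorem map_chainClass (f : ⦋m⦌ ⟶ ⦋n⦌) (γ : nerve C _⦋n⦌) :
    (orbitNerve hconj).map f.op (chainClass hconj γ) = chainClass hconj ((nerve C).map f.op γ) :=
  rfl

variable {hconj}

theorem chainClass_eq_iff {γ γ' : nerve C _⦋n⦌} : chainClass hconj γ = chainClass hconj γ' ↔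
    ∃ g : G, ∀ i, MulAut.conj g • (γ.obj i : Subgroup G) = γ'.obj i := by
  refine (orbitSSetProj_app_eq_iff (conjNerve_one hconj) (conjNerve_comp hconj)).trans
    (((Equiv.inv G).exists_congr_left).trans (exists_congr fun g => ⟨?_, fun h => ?_⟩))
  · rintro rfl i
    change _ = conjSub g⁻¹ (γ.obj i : Subgroup G)
    rw [conjSub_eq_smul, inv_inv]
  · refine nerve.ext_of_isThin (C := C) (funext fun i => Subtype.ext ?_)
    change conjSub g⁻¹ (γ.obj i : Subgroup G) = _
    rw [conjSub_eq_smul, inv_inv, h]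

theorem chainClass_mem_nonDegenerate_iff {γ : nerve C _⦋n⦌} :
    chainClass hconj γ ∈ (orbitNerve hconj).nonDegenerate n ↔ StrictMono γ.obj :=
  (orbitSSetProj_app_mem_nonDegenerate_iff (conjNerve_one hconj) (conjNerve_comp hconj)).trans
    (PartialOrder.mem_nerve_nonDegenerate_iff_strictMono γ)

theorem chainMembers_subset_of_map_eq {γ : nerve C _⦋n⦌} {γ' : nerve C _⦋m⦌} {f : ⦋n⦌ ⟶ ⦋m⦌}
    (h : (orbitNerve hconj).map f.op (chainClass hconj γ') = chainClass hconj γ) :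
    ∃ g : G, MulAut.conj g • chainMembers γ ⊆ chainMembers γ' := by
  obtain ⟨g, hg⟩ := chainClass_eq_iff.1 (h.symm.trans (map_chainClass hconj f γ'))
  refine ⟨g, ?_⟩
  rintro _ ⟨_, ⟨i, rfl⟩, rfl⟩
  exact ⟨f.toOrderHom i, (hg i).symm⟩

theorem mk_chainClass_eq_iff {γ : nerve C _⦋n⦌} {γ' : nerve C _⦋m⦌} (hγ : StrictMono γ.obj)
    (hγ' : StrictMono γ'.obj) :
    SSet.S.mk (chainClass hconj γ) = SSet.S.mk (chainClass hconj γ') ↔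
      ∃ g : G, MulAut.conj g • chainMembers γ = chainMembers γ' := by
  refine ⟨fun h => ?_, fun ⟨g, hg⟩ => ?_⟩
  · obtain rfl : n = m := SSet.S.dim_eq_of_mk_eq h
    obtain ⟨g, hg⟩ := chainClass_eq_iff.1 ((SSet.S.ext_iff _ _).1 h)
    exact ⟨g, by simp only [chainMembers, Set.smul_set_range, hg]⟩
  · obtain rfl : n = m := by
      have hcard := congrArg Set.ncard hg
      rw [Set.ncard_smul_set, ncard_chainMembers hγ, ncard_chainMembers hγ'] at hcard
      lia
    have hmono : StrictMono fun i => MulAut.conj g • (γ.obj i : Subgroup G) := fun i j hij =>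
      lt_of_le_not_ge (Subgroup.pointwise_smul_le_pointwise_smul_iff.2 (hγ hij).le)
        (Subgroup.pointwise_smul_le_pointwise_smul_iff.not.2 (hγ hij).not_ge)
    rw [chainMembers, Set.smul_set_range] at hg
    have hobj := (StrictMono.range_inj hmono (Subtype.strictMono_coe _ |>.comp hγ')).1 hg
    exact (SSet.S.ext_iff _ _).2 (chainClass_eq_iff.2 ⟨g, congrFun hobj⟩)

theorem δ_chainClass_injective [Finite G] {γ : nerve C _⦋n + 1⦌} (hγ : StrictMono γ.obj) :
    Function.Injective fun i => (orbitNerve hconj).δ i (chainClass hconj γ) := by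
  intro i j hij
  obtain ⟨g, hg⟩ := chainClass_eq_iff.1 hij
  have hcard : StrictMono fun k => Nat.card (γ.obj k : Subgroup G) :=
    fun _ _ hab => card_subgroup_lt_card_of_lt (hγ hab)
  refine Fin.succAbove_left_injective (funext fun k => hcard.injective ?_)
  exact (card_pointwise_smul_subgroup (MulAut.conj g) _).symm.trans
    (congrArg (fun P : Subgroup G => Nat.card P) (hg k))

/-- The vertex of the orbit complex given by the conjugacy class of `S`. -/
def vertexClass (hconj : ∀ P ∈ C, ∀ g : G, conjSub g P ∈ C) (S : C) : orbitNerve hconj _⦋0⦌ :=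
  chainClass hconj (ComposableArrows.mk₀ S)

theorem chainClass_mem_ofSimplex_vertexClass_iff {S : C} {γ : nerve C _⦋n⦌} :
    chainClass hconj γ ∈ (SSet.Subcomplex.ofSimplex (vertexClass hconj S)).obj _ ↔
      ∃ g : G, ∀ P ∈ chainMembers γ, MulAut.conj g • P = S := by
  rw [SSet.Subcomplex.mem_ofSimplex_obj_iff]
  constructor
  · rintro ⟨f, hf⟩
    obtain ⟨g, hg⟩ := chainClass_eq_iff.1 (hf.symm.trans (map_chainClass hconj f _))
    refine ⟨g, ?_⟩
    rintro _ ⟨i, rfl⟩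
    exact hg i
  · rintro ⟨g, hg⟩
    exact ⟨SimplexCategory.const ⦋n⦌ ⦋0⦌ 0, (map_chainClass hconj _ _).trans
      (chainClass_eq_iff.2 ⟨g, fun i => hg _ ⟨i, rfl⟩⟩).symm⟩

end OrbitNerve

section Matching

open Simplicial Opposite

/-- A strict chain of members of `C` that contains the product `Q ⊔ L` of its pivot, at position
`pos`. These are the chains from which the matching removes a member. -/
structure ExpandedChain {G : Type} [Group G] (p : ℕ) (C : Set (Subgroup G)) where
  dim : ℕ
  chain : nerve C _⦋dim + 1⦌
  strictMono : StrictMono chain.obj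
  Q : Subgroup G
  L : Subgroup G
  isPivot : IsPivot p (chainMembers chain) Q L
  pos : Fin (dim + 2)
  obj_pos : (chain.obj pos : Subgroup G) = Q ⊔ L

variable {G : Type} [Group G] {p : ℕ} {C : Set (Subgroup G)}
  {hconj : ∀ P ∈ C, ∀ g : G, conjSub g P ∈ C} {n : ℕ}

namespace ExpandedChain

/-- The chain matched with `e`, obtained by removing `Q ⊔ L`. -/
def face (e : ExpandedChain p C) : nerve C _⦋e.dim⦌ := (nerve C).δ e.pos e.chain

theorem strictMono_face (e : ExpandedChain p C) : StrictMono e.face.obj :=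
  e.strictMono.comp (Fin.strictMono_succAbove e.pos)

theorem sup_mem (e : ExpandedChain p C) : e.Q ⊔ e.L ∈ chainMembers e.chain :=
  ⟨e.pos, e.obj_pos⟩

theorem chainMembers_face (e : ExpandedChain p C) :
    chainMembers e.face = chainMembers e.chain \ {e.Q ⊔ e.L} :=
  (chainMembers_δ e.strictMono e.pos).trans (by rw [e.obj_pos])

theorem isPGroup_sup (e : ExpandedChain p C) (hpg : ∀ P ∈ C, IsPGroup p P) :
    IsPGroup p (e.Q ⊔ e.L : Subgroup G) :=
  e.isPivot.isPGroup_sup (hpg _ (mem_of_mem_chainMembers e.isPivot.mem))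

variable [Fact p.Prime] [Finite G]

theorem isPivot_face (e : ExpandedChain p C) : IsPivot p (chainMembers e.face) e.Q e.L :=
  e.chainMembers_face ▸ e.isPivot.sdiff_sup

theorem sup_notMem_face (e : ExpandedChain p C) {Q L : Subgroup G}
    (h : IsPivot p (chainMembers e.face) Q L) : Q ⊔ L ∉ chainMembers e.face := by
  rw [e.chainMembers_face] at h ⊢
  exact e.isPivot.sup_notMem_sdiff h

theorem mk_chainClass_eq_of_face {e e' : ExpandedChain p C}
    (h : SSet.S.mk (chainClass hconj e.face) = SSet.S.mk (chainClass hconj e'.face)) :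
    SSet.S.mk (chainClass hconj e.chain) = SSet.S.mk (chainClass hconj e'.chain) := by
  obtain ⟨g, hg⟩ := (mk_chainClass_eq_iff e.strictMono_face e'.strictMono_face).1 h
  rw [e.chainMembers_face, e'.chainMembers_face] at hg
  exact (mk_chainClass_eq_iff e.strictMono e'.strictMono).2
    (e.isPivot.exists_conj_smul_eq_of_sdiff e.sup_mem e'.isPivot e'.sup_mem hg)

theorem mk_chainClass_face_eq {e e' : ExpandedChain p C}
    (h : SSet.S.mk (chainClass hconj e.chain) = SSet.S.mk (chainClass hconj e'.chain)) :
    SSet.S.mk (chainClass hconj e.face) = SSet.S.mk (chainClass hconj e'.face) := by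
  obtain ⟨g, hg⟩ := (mk_chainClass_eq_iff e.strictMono e'.strictMono).1 h
  have hsup : MulAut.conj g • (e.Q ⊔ e.L) = e'.Q ⊔ e'.L := by
    have hpivot := e.isPivot.smul (MulAut.conj g)
    have hmem := Set.smul_mem_smul_set (a := MulAut.conj g) e.sup_mem
    rw [hg] at hpivot hmem
    rw [Subgroup.smul_sup] at hmem ⊢
    exact hpivot.sup_eq_sup_of_mem hmem e'.isPivot
  refine (mk_chainClass_eq_iff e.strictMono_face e'.strictMono_face).2 ⟨g, ?_⟩
  rw [e.chainMembers_face, e'.chainMembers_face, Set.smul_set_sdiff, hg, Set.smul_set_singleton,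
    hsup]

theorem mk_chainClass_ne_face (e e' : ExpandedChain p C) :
    SSet.S.mk (chainClass hconj e.chain) ≠ SSet.S.mk (chainClass hconj e'.face) := by
  intro h
  obtain ⟨g, hg⟩ := (mk_chainClass_eq_iff e.strictMono e'.strictMono_face).1 h
  have hmem := Set.smul_mem_smul_set (a := MulAut.conj g) e.sup_mem
  rw [hg, Subgroup.smul_sup] at hmem
  exact e'.sup_notMem_face (hg ▸ e.isPivot.smul (MulAut.conj g)) hmem

/-- A lexicographic rank that increases from `e` to any other `e'` of the same dimension having
`e.face` as a face up to conjugation. The subtraction does not truncate, as `|Q| ≤ |G|`. -/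
noncomputable def rank (e : ExpandedChain p C) : ℕ ×ₗ ℕ :=
  toLex (Nat.card G - Nat.card e.Q, Nat.card e.L)

theorem rank_lt_rank {e e' : ExpandedChain p C} (hdim : e.dim = e'.dim)
    (hne : SSet.S.mk (chainClass hconj e.chain) ≠ SSet.S.mk (chainClass hconj e'.chain))
    {f : ⦋e.dim⦌ ⟶ ⦋e'.dim + 1⦌}
    (hf : (orbitNerve hconj).map f.op (chainClass hconj e'.chain) = chainClass hconj e.face) :
    e.rank < e'.rank := by
  obtain ⟨g, hsub⟩ := chainMembers_subset_of_map_eq hf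
  have hpivot := e.isPivot_face.smul (MulAut.conj g)
  have hsup : MulAut.conj g • e.Q ⊔ MulAut.conj g • e.L ∉ MulAut.conj g • chainMembers e.face := by
    rw [← Subgroup.smul_sup, Set.smul_mem_smul_set_iff]
    exact e.sup_notMem_face e.isPivot_face
  have hsup' : e'.Q ⊔ e'.L ∈ MulAut.conj g • chainMembers e.face := by
    by_contra hnot
    have hsub' : MulAut.conj g • chainMembers e.face ⊆ chainMembers e'.face :=
      e'.chainMembers_face ▸ Set.subset_sdiff_singleton hsub hnot
    have heq := Set.eq_of_subset_of_ncard_le hsub' (by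
      rw [Set.ncard_smul_set, ncard_chainMembers e.strictMono_face,
        ncard_chainMembers e'.strictMono_face, hdim])
    exact hne (mk_chainClass_eq_of_face
      ((mk_chainClass_eq_iff e.strictMono_face e'.strictMono_face).2 ⟨g, heq⟩))
  have hcard := hpivot.card_lt_or_card_lt_of_subset hsup e'.isPivot hsub hsup'
  rw [card_pointwise_smul_subgroup, card_pointwise_smul_subgroup] at hcard
  have hQ : Nat.card e.Q ≤ Nat.card G := Subgroup.card_le_card_group e.Q
  rw [rank, rank, Prod.Lex.toLex_lt_toLex]
  lia

end ExpandedChain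

theorem exists_expandedChain_chain_eq {γ : nerve C _⦋n⦌} (hγ : StrictMono γ.obj)
    {Q L : Subgroup G} (h : IsPivot p (chainMembers γ) Q L) (hQL : Q ⊔ L ∈ chainMembers γ) :
    ∃ e : ExpandedChain p C,
      SSet.S.mk (chainClass hconj γ) = SSet.S.mk (chainClass hconj e.chain) := by
  obtain ⟨i, hi⟩ := hQL
  obtain ⟨j, hj⟩ := h.mem
  cases n with
  | zero =>
    have hlt := h.lt_sup
    rw [← hi, ← hj, Subsingleton.elim (α := Fin 1) i j] at hlt
    exact absurd hlt (lt_irrefl _)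
  | succ d => exact ⟨⟨d, γ, hγ, Q, L, h, i, hi⟩, rfl⟩

theorem exists_expandedChain_face_eq [Finite G] {γ : nerve C _⦋n⦌}
    (hγ : StrictMono γ.obj) {Q L : Subgroup G} (h : IsPivot p (chainMembers γ) Q L)
    (hQLC : Q ⊔ L ∈ C) (hQL : Q ⊔ L ∉ chainMembers γ) :
    ∃ e : ExpandedChain p C,
      SSet.S.mk (chainClass hconj γ) = SSet.S.mk (chainClass hconj e.face) := by
  have hcard : (insert (Q ⊔ L) (chainMembers γ)).ncard = n + 2 := by
    rw [Set.ncard_insert_of_notMem hQL, ncard_chainMembers hγ]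
  obtain ⟨γ', hγ', hmem⟩ := exists_chain_chainMembers_eq
    (Set.insert_subset hQLC fun P hP => mem_of_mem_chainMembers hP)
    (h.isChain_insert_sup (isChain_chainMembers γ)) hcard
  obtain ⟨i, hi⟩ : Q ⊔ L ∈ chainMembers γ' := hmem ▸ Set.mem_insert _ _
  let e : ExpandedChain p C := ⟨n, γ', hγ', Q, L, hmem ▸ h.insert_sup, i, hi⟩
  refine ⟨e, (mk_chainClass_eq_iff hγ e.strictMono_face).2 ⟨1, ?_⟩⟩
  rw [map_one, one_smul, e.chainMembers_face, hmem, Set.insert_sdiff_self_of_notMem hQL]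

variable (p hconj) in
/-- The conjugacy classes of expanded chains, as simplices of the orbit complex. -/
def expandedClasses : Set (orbitNerve hconj).S :=
  Set.range fun e : ExpandedChain p C => SSet.S.mk (chainClass hconj e.chain)

/-- A chosen expanded chain in a class of expanded chains. -/
noncomputable def expandedClasses.rep (s : expandedClasses p hconj) : ExpandedChain p C :=
  s.2.choose

theorem expandedClasses.mk_chainClass_rep (s : expandedClasses p hconj) :
    SSet.S.mk (chainClass hconj (rep s).chain) = s.1 :=
  s.2.choose_spec

theorem expandedClasses.ext_rep {s t : expandedClasses p hconj}
    (h : SSet.S.mk (chainClass hconj (rep s).chain) = SSet.S.mk (chainClass hconj (rep t).chain)) :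
    s = t :=
  Subtype.ext ((mk_chainClass_rep s).symm.trans (h.trans (mk_chainClass_rep t)))

variable [Fact p.Prime] [Finite G] {S : C}

theorem chainClass_notMem_ofSimplex_of_lt (hS : IsMaximalPSubgroup p ⊤ (S : Subgroup G))
    {γ : nerve C _⦋n⦌} {L R : Subgroup G} (hL : L ∈ chainMembers γ) (hLR : L < R)
    (hR : IsPGroup p R) :
    chainClass hconj γ ∉ (SSet.Subcomplex.ofSimplex (vertexClass hconj S)).obj _ := by
  rw [chainClass_mem_ofSimplex_vertexClass_iff]
  rintro ⟨g, hg⟩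
  have hcard : Nat.card L < Nat.card R := card_subgroup_lt_card_of_lt hLR
  rw [← card_pointwise_smul_subgroup (MulAut.conj g) L, hg L hL] at hcard
  exact hcard.not_ge (hS.card_le_card hR le_top)

theorem chainClass_mem_ofSimplex_of_forall_le (hpg : ∀ P ∈ C, IsPGroup p P)
    (hS : IsMaximalPSubgroup p ⊤ (S : Subgroup G)) {γ : nerve C _⦋n⦌} {Q : Subgroup G}
    (hQ : IsMaximalPSubgroup p (commonNormalizer (chainMembers γ)) Q)
    (hle : ∀ P ∈ chainMembers γ, Q ≤ P) :
    chainClass hconj γ ∈ (SSet.Subcomplex.ofSimplex (vertexClass hconj S)).obj _ := by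
  have hsingle : chainMembers γ = {Q} :=
    hQ.eq_singleton_of_forall_le (fun P hP => hpg P (mem_of_mem_chainMembers hP))
      (isChain_chainMembers γ) (Set.range_nonempty _) hle
  rw [hsingle] at hQ
  obtain ⟨g, -, hg⟩ := hQ.top_of_commonNormalizer_singleton.exists_conj_smul_eq hS
  refine chainClass_mem_ofSimplex_vertexClass_iff.2 ⟨g, fun P hP => ?_⟩
  rw [hsingle] at hP
  rw [hP, hg]

theorem exists_expandedChain_of_notMem (hpg : ∀ P ∈ C, IsPGroup p P)
    (hover : ∀ P ∈ C, ∀ Q : Subgroup G, P ≤ Q → IsPGroup p Q → Q ∈ C)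
    (hS : IsMaximalPSubgroup p ⊤ (S : Subgroup G)) {γ : nerve C _⦋n⦌} (hγ : StrictMono γ.obj)
    (hnot : chainClass hconj γ ∉ (SSet.Subcomplex.ofSimplex (vertexClass hconj S)).obj _) :
    ∃ e : ExpandedChain p C,
      SSet.S.mk (chainClass hconj γ) = SSet.S.mk (chainClass hconj e.chain) ∨
        SSet.S.mk (chainClass hconj γ) = SSet.S.mk (chainClass hconj e.face) := by
  obtain ⟨Q, hQ, -⟩ := exists_isMaximalPSubgroup_ge (p := p) IsPGroup.of_bot
    (bot_le (a := commonNormalizer (chainMembers γ)))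
  obtain ⟨L, h⟩ := exists_isPivot_of_not_forall_le hQ (isChain_chainMembers γ)
    fun hle => hnot (chainClass_mem_ofSimplex_of_forall_le hpg hS hQ hle)
  have hLC : L ∈ C := mem_of_mem_chainMembers h.mem
  by_cases hQL : Q ⊔ L ∈ chainMembers γ
  · exact (exists_expandedChain_chain_eq hγ h hQL).imp fun _ => Or.inl
  · have hQLC : Q ⊔ L ∈ C := hover L hLC _ le_sup_right (h.isPGroup_sup (hpg L hLC))
    exact (exists_expandedChain_face_eq hγ h hQLC hQL).imp fun _ => Or.inr

variable (hconj)

/-- The matching of the simplices outside the Sylow vertex: the class of an expanded chain is paired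
with the class of the chain from which `Q ⊔ L` is removed. -/
noncomputable def chainPairing (hpg : ∀ P ∈ C, IsPGroup p P)
    (hover : ∀ P ∈ C, ∀ Q : Subgroup G, P ≤ Q → IsPGroup p Q → Q ∈ C)
    (hS : IsMaximalPSubgroup p ⊤ (S : Subgroup G)) :
    (SSet.Subcomplex.ofSimplex (vertexClass hconj S)).PairingCore where
  ι := expandedClasses p hconj
  dim s := (expandedClasses.rep s).dim
  simplex s := chainClass hconj (expandedClasses.rep s).chain
  index s := (expandedClasses.rep s).pos
  nonDegenerate₁ s := chainClass_mem_nonDegenerate_iff.2 (expandedClasses.rep s).strictMono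
  nonDegenerate₂ s := chainClass_mem_nonDegenerate_iff.2 (expandedClasses.rep s).strictMono_face
  notMem₁ s :=
    let e := expandedClasses.rep s
    chainClass_notMem_ofSimplex_of_lt hS e.isPivot.mem e.isPivot.lt_sup (e.isPGroup_sup hpg)
  notMem₂ s :=
    let e := expandedClasses.rep s
    chainClass_notMem_ofSimplex_of_lt hS e.isPivot_face.mem e.isPivot.lt_sup (e.isPGroup_sup hpg)
  injective_type₁' := expandedClasses.ext_rep
  injective_type₂' h := expandedClasses.ext_rep (ExpandedChain.mk_chainClass_eq_of_face h)
  type₁_ne_type₂' s t :=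
    (expandedClasses.rep s).mk_chainClass_ne_face (expandedClasses.rep t)
  surjective' x := by
    obtain ⟨n, y, hy, hnot, rfl⟩ := x.mk_surjective
    obtain ⟨γ, rfl⟩ := chainClass_surjective hconj y
    obtain ⟨e, he⟩ := exists_expandedChain_of_notMem hpg hover hS
      (chainClass_mem_nonDegenerate_iff.1 hy) hnot
    have hrep := expandedClasses.mk_chainClass_rep (p := p) (hconj := hconj) ⟨_, e, rfl⟩
    exact ⟨⟨_, e, rfl⟩, he.imp (·.trans hrep.symm)
      (·.trans (ExpandedChain.mk_chainClass_face_eq hrep.symm))⟩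

theorem chainPairing_isProper (hpg : ∀ P ∈ C, IsPGroup p P)
    (hover : ∀ P ∈ C, ∀ Q : Subgroup G, P ≤ Q → IsPGroup p Q → Q ∈ C)
    (hS : IsMaximalPSubgroup p ⊤ (S : Subgroup G)) :
    (chainPairing hconj hpg hover hS).IsProper where
  isUniquelyCodimOneFace s :=
    (SSet.S.IsUniquelyCodimOneFace.iff _ _).2 (existsUnique_of_exists_of_unique ⟨_, rfl⟩
      fun _ _ hi hj => δ_chainClass_injective (expandedClasses.rep s).strictMono (hi.trans hj.symm))

/-- The rank of the chosen representatives; its existence makes the matching acyclic. -/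
noncomputable def chainPairingRank (hpg : ∀ P ∈ C, IsPGroup p P)
    (hover : ∀ P ∈ C, ∀ Q : Subgroup G, P ≤ Q → IsPGroup p Q → Q ∈ C)
    (hS : IsMaximalPSubgroup p ⊤ (S : Subgroup G)) :
    (chainPairing hconj hpg hover hS).WeakRankFunction (ℕ ×ₗ ℕ) where
  rank s := (expandedClasses.rep s).rank
  lt {s t} h hdim := by
    obtain ⟨hne, hlt⟩ := h
    obtain ⟨f, hf⟩ := SSet.S.le_iff.1 (SSet.N.le_iff.1 (SSet.Subcomplex.N.le_iff.1 hlt.le))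
    exact ExpandedChain.rank_lt_rank hdim (fun heq => hne (expandedClasses.ext_rep heq)) hf

theorem anodyneExtensions_ofSimplex_vertexClass (hpg : ∀ P ∈ C, IsPGroup p P)
    (hover : ∀ P ∈ C, ∀ Q : Subgroup G, P ≤ Q → IsPGroup p Q → Q ∈ C)
    (hS : IsMaximalPSubgroup p ⊤ (S : Subgroup G)) :
    SSet.anodyneExtensions (SSet.Subcomplex.ofSimplex (vertexClass hconj S)).ι := by
  have := chainPairing_isProper hconj hpg hover hS
  have := (chainPairingRank hconj hpg hover hS).isRegular
  exact (chainPairing hconj hpg hover hS).pairing.anodyneExtensions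

end Matching

/-- Let `G` be a finite group, `p` a prime, and `C` a nonempty collection of
nontrivial `p`-subgroups of `G` closed under `G`-conjugation and under passage
to overgroups that are `p`-groups.  Then the quotient of the geometric
realization of the order complex (nerve) of the poset `C` by the conjugation
action of `G` is contractible.  Here the quotient is the quotient space of the
realization by the relation identifying each point with its image under the
self-map induced (functorially, via the nerve and geometric realization) by
conjugation by each `g ∈ G`. -/
theorem orbit_space_contractible_of_finite (p : ℕ) (hp : p.Prime)
    {G : Type} [Group G] [Finite G]
    (C : Set (Subgroup G)) (hne : C.Nonempty)
    (hnt : ∀ P ∈ C, P ≠ ⊥)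
    (hpg : ∀ P ∈ C, IsPGroup p P)
    (hconj : ∀ P ∈ C, ∀ g : G, conjSub g P ∈ C)
    (hover : ∀ P ∈ C, ∀ Q : Subgroup G, P ≤ Q → IsPGroup p Q → Q ∈ C) :
    ContractibleSpace
      (Quot (fun x y : (SSet.toTop.obj (nerveFunctor.obj (Cat.of ↥C))) =>
        ∃ g : G,
          (SSet.toTop.map (nerveFunctor.map (conjFun_monotone C hconj g).functor.toCatHom)) x = y)) := by
  have := Fact.mk hp
  obtain ⟨P, hP⟩ := hne
  obtain ⟨S, hS, hPS⟩ := exists_isMaximalPSubgroup_ge (hpg P hP) le_top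
  have hSC : S ∈ C := hover P hP S hPS hS.isPGroup
  have hanodyne : SSet.anodyneExtensions
      (SSet.Subcomplex.ofSimplex (vertexClass hconj ⟨S, hSC⟩)).ι :=
    anodyneExtensions_ofSimplex_vertexClass hconj hpg hover hS
  have : ContractibleSpace (SSet.toTop.obj (orbitNerve hconj)) :=
    contractibleSpace_toTop_of_anodyneExtensions_ofSimplex _ hanodyne
  exact (TopCat.homeoOfIso (realizationOrbitIso (conjNerve C hconj))).contractibleSpace
end

section
/- Let p be a prime, G a group, and γ = (P_0 < P_1 < ... < P_n) a redundant chain of nontrivial finite p-subgroups of G. Let Q and R be Sylow p-subgroups of N_G(γ). Then: (a) for every index 0 ≤ i ≤ n, Q ≤ P_i if and only if R ≤ P_i; in particular the maximal index i with Q not contained in P_i equals the maximal index i' with R not contained in P_{i'}; (b) there exists g ∈ N_G(γ) such that g⁻¹Qg = R and g⁻¹(QP_j)g = RP_j for every 0 ≤ j ≤ n; in particular the chain obtained from γ by inserting QP_i after position i and the chain obtained by inserting RP_i after position i are conjugate in G. -/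
open scoped Pointwise

/-!
Each of two Sylow `p`-subgroups `Q`, `R` of `N` is conjugate in `N` into the other, so by finiteness
they have the same order and some `g ∈ N` carries `Q` onto `R`. For `N = N_G(γ)` this `g` fixes
every member of `γ`, hence carries anything built from `Q` and `γ` to its counterpart for `R`.
-/

section ConjSub

variable {G : Type*} [Group G]

theorem card_conjSub (g : G) (P : Subgroup G) : Nat.card (conjSub g P) = Nat.card P :=
  Subgroup.card_map_of_injective (MulAut.conj g⁻¹).injective

theorem conjSub_le_conjSub_iff (g : G) {P Q : Subgroup G} :
    conjSub g P ≤ conjSub g Q ↔ P ≤ Q :=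
  Subgroup.map_le_map_iff_of_injective (MulAut.conj g⁻¹).injective

theorem conjSub_sup (g : G) (P Q : Subgroup G) :
    conjSub g (P ⊔ Q) = conjSub g P ⊔ conjSub g Q :=
  Subgroup.map_sup P Q _

theorem conjSub_eq_self_iff_mem_normalizer {g : G} {P : Subgroup G} :
    conjSub g P = P ↔ g ∈ Subgroup.normalizer (P : Set G) :=
  Subgroup.mem_normalizer_iff_map_conj_eq.symm.trans inv_mem_iff

theorem conjSub_eq_self_of_mem_chainNorm {n : ℕ} {γ : Fin (n + 1) → Subgroup G} {g : G}
    (hg : g ∈ chainNorm γ) (i : Fin (n + 1)) : conjSub g (γ i) = γ i :=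
  conjSub_eq_self_iff_mem_normalizer.mpr (Subgroup.mem_iInf.mp hg i)

theorem conjSub_insertChain {n : ℕ} (g : G) (γ : Fin (n + 1) → Subgroup G) (i : Fin (n + 1))
    (H : Subgroup G) (j : Fin (n + 2)) :
    conjSub g (insertChain γ i H j) = insertChain (fun k => conjSub g (γ k)) i (conjSub g H) j := by
  unfold insertChain
  split_ifs <;> rfl

end ConjSub

namespace IsSylowIn

variable {p : ℕ} {G : Type*} [Group G] {N S T : Subgroup G}

theorem card_le (hS : IsSylowIn p N S) {P : Subgroup G} (hPN : P ≤ N) [Finite P]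
    (hP : IsPGroup p P) : Nat.card P ≤ Nat.card S := by
  obtain ⟨-, hSfin, -, hSconj⟩ := hS
  obtain ⟨g, -, hgP⟩ := hSconj P hPN ‹_› hP
  calc
    Nat.card P = Nat.card (conjSub g P) := (card_conjSub g P).symm
    _ ≤ Nat.card S := Subgroup.card_le_of_le hgP

theorem exists_conjSub_eq (hS : IsSylowIn p N S) (hT : IsSylowIn p N T) :
    ∃ g ∈ N, conjSub g S = T := by
  obtain ⟨hTN, hTfin, hTp, hTconj⟩ := hT
  obtain ⟨g, hgN, hgST⟩ := hTconj S hS.1 hS.2.1 hS.2.2.1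
  have hcard : Nat.card T ≤ Nat.card (conjSub g S) :=
    (hS.card_le hTN hTp).trans_eq (card_conjSub g S).symm
  exact ⟨g, hgN, Subgroup.eq_of_le_of_card_ge hgST hcard⟩

end IsSylowIn

theorem redundant_sylow_independence_general {p : ℕ} {G : Type*} [Group G] {n : ℕ}
    {γ : Fin (n + 1) → Subgroup G} {Q R : Subgroup G}
    (hQ : IsSylowIn p (chainNorm γ) Q) (hR : IsSylowIn p (chainNorm γ) R) :
    (∀ i : Fin (n + 1), Q ≤ γ i ↔ R ≤ γ i) ∧
    ∃ g ∈ chainNorm γ, conjSub g Q = R ∧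
      (∀ j : Fin (n + 1), conjSub g (Q ⊔ γ j) = R ⊔ γ j) ∧
      ∀ (i : Fin (n + 1)) (j : Fin (n + 2)),
        conjSub g (insertChain γ i (Q ⊔ γ i) j) = insertChain γ i (R ⊔ γ i) j := by
  obtain ⟨g, hg, hgQ⟩ := hQ.exists_conjSub_eq hR
  have hgγ : ∀ i, conjSub g (γ i) = γ i := conjSub_eq_self_of_mem_chainNorm hg
  have hg_sup : ∀ j, conjSub g (Q ⊔ γ j) = R ⊔ γ j := fun j => by
    rw [conjSub_sup, hgQ, hgγ]
  refine ⟨fun i => ?_, g, hg, hgQ, hg_sup, fun i j => ?_⟩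
  · rw [← conjSub_le_conjSub_iff g, hgQ, hgγ]
  · simp only [conjSub_insertChain, hgγ, hg_sup]

/-- For a redundant chain `γ` of nontrivial finite `p`-subgroups and two Sylow
`p`-subgroups `Q`, `R` of `N_G(γ)`: (a) `Q ≤ P_i` iff `R ≤ P_i` for every `i`
(so the maximal indices at which `Q` resp. `R` are not contained agree); and
(b) there is `g ∈ N_G(γ)` with `g⁻¹Qg = R` and `g⁻¹(Q·P_j)g = R·P_j` for all
`j`; in particular the chains obtained by inserting `Q·P_i`, resp. `R·P_i`,
after the maximal position `i` are conjugate in `G`. -/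
theorem redundant_sylow_independence (p : ℕ) (hp : p.Prime) {G : Type*} [Group G] {n : ℕ}
    (γ : Fin (n + 1) → Subgroup G) (hmono : StrictMono γ)
    (hnt : ∀ i, γ i ≠ ⊥) (hfin : ∀ i, Finite (γ i)) (hpg : ∀ i, IsPGroup p (γ i))
    (hred : IsRedundant p γ)
    (Q R : Subgroup G) (hQ : IsSylowIn p (chainNorm γ) Q)
    (hR : IsSylowIn p (chainNorm γ) R) :
    (∀ i : Fin (n + 1), Q ≤ γ i ↔ R ≤ γ i) ∧
    ∃ g ∈ chainNorm γ, conjSub g Q = R ∧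
      (∀ j : Fin (n + 1), conjSub g (Q ⊔ γ j) = R ⊔ γ j) ∧
      (∀ i : Fin (n + 1), ¬ Q ≤ γ i → (∀ j : Fin (n + 1), i < j → Q ≤ γ j) →
        ∀ j : Fin (n + 2),
          conjSub g (insertChain γ i (Q ⊔ γ i) j) = insertChain γ i (R ⊔ γ i) j) := by
  obtain ⟨hle, g, hg, hgQ, hg_sup, hg_insert⟩ := redundant_sylow_independence_general hQ hR
  exact ⟨hle, g, hg, hgQ, hg_sup, fun i _ _ => hg_insert i⟩
end
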